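/- Let f ∈ ℝ[x_1,…,x_n] be nonnegative on all of ℝ^n. Then for every ε > 0 there exists r(ε) ∈ ℕ such that, for every r ≥ r(ε), the polynomial f + ε·θ_r is a sum of squares of real polynomials. -/

import Mathlib

open MvPolynomial MeasureTheory Filter Topology

/-- `θ_r(x) = ∑_{k=0}^r ∑_{i=1}^n x_i^{2k}/k!` as a polynomial in `ℝ[x_1,…,x_n]`. -/
noncomputable def theta (n r : ℕ) : MvPolynomial (Fin n) ℝ :=
  ∑ k ∈ Finset.range (r + 1), ∑ i : Fin n,
    C ((1 : ℝ) / (Nat.factorial k : ℝ)) * X i ^ (2 * k)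

/-- A polynomial is a sum of squares if it is a finite sum of squares of polynomials. -/
def IsSOS {n : ℕ} (p : MvPolynomial (Fin n) ℝ) : Prop :=
  ∃ (k : ℕ) (q : Fin k → MvPolynomial (Fin n) ℝ), p = ∑ i, q i ^ 2

/-!
Suppose that `f + ε θ_r` is a sum of squares for no `r`; by monotonicity in `r` this is the negation
of the claim. The polynomials lying below some `θ_r` in the sum-of-squares order form a convex
set, absorbing for `n > 0`, so Hahn-Banach gives a linear form `L`, nonnegative on squares, with
`L θ_r ≤ 1` for all `r` and `L f < 0`. To contradict this it is enough that `L` is nonnegative on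
nonnegative polynomials, which is proved without representing `L` by a measure.

The bounds `L (x_i ^ 2k) ≤ k!` and iterated Cauchy-Schwarz inequalities make the moments of `L` grow
slowly enough for `L` to extend, still nonnegative on squares, to an algebra of power series
containing `sin (g x_i)` and `cos (g x_i)`. The series `y = sin (g x_i) cos (g x_i)` satisfies
`1/2 + y = (cos + sin)² / 2` and `1/2 - y = (cos - sin)² / 2`, so for the extended functional it
behaves like a variable confined to `[-1/2, 1/2]`, and Bernstein approximation on the cube shows
that the functional is nonnegative at `f (y / g)`. As `g → 0`, `y / g` tends to `x`.
-/

/-! ### Domination by the polynomials `θ_r` -/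

theorem isSOS_iff_isSumSq {n : ℕ} {p : MvPolynomial (Fin n) ℝ} : IsSOS p ↔ IsSumSq p := by
  constructor
  · rintro ⟨k, q, rfl⟩
    exact IsSumSq.sum_sq _ _
  · intro h
    induction h with
    | zero => exact ⟨0, Fin.elim0, by simp⟩
    | sq_add a _ ih =>
      obtain ⟨k, q, rfl⟩ := ih
      exact ⟨k + 1, Fin.cons a q, by simp [Fin.sum_univ_succ, sq]⟩

theorem isSumSq_algebraMap {A : Type*} [CommSemiring A] [Algebra ℝ A] {c : ℝ} (hc : 0 ≤ c) :
    IsSumSq (algebraMap ℝ A c) := by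
  rw [← Real.mul_self_sqrt hc, map_mul]
  exact IsSumSq.mul_self _

theorem isSumSq_C_mul {σ : Type*} {p : MvPolynomial σ ℝ} (hp : IsSumSq p) {c : ℝ} (hc : 0 ≤ c) :
    IsSumSq (C c * p) :=
  (isSumSq_algebraMap hc).mul hp

theorem isSumSq_theta_term {n : ℕ} (k : ℕ) (i : Fin n) :
    IsSumSq (C ((1 : ℝ) / (Nat.factorial k : ℝ)) * X i ^ (2 * k) : MvPolynomial (Fin n) ℝ) :=
  isSumSq_C_mul (by rw [two_mul, pow_add]; exact IsSumSq.mul_self _) (by positivity)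

theorem isSumSq_theta (n r : ℕ) : IsSumSq (theta n r) :=
  IsSumSq.sum fun k _ => IsSumSq.sum fun i _ => isSumSq_theta_term k i

theorem isSumSq_theta_sub_theta {n r s : ℕ} (h : r ≤ s) : IsSumSq (theta n s - theta n r) := by
  rw [theta, theta, ← Finset.sum_Ico_eq_sub _ (by omega)]
  exact IsSumSq.sum fun k _ => IsSumSq.sum fun i _ => isSumSq_theta_term k i

theorem isSumSq_theta_sub_term {n : ℕ} (k : ℕ) (i : Fin n) :
    IsSumSq (theta n k - C ((1 : ℝ) / (Nat.factorial k : ℝ)) * X i ^ (2 * k)) := by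
  rw [theta, ← Finset.add_sum_erase _ _ (Finset.self_mem_range_succ k),
    ← Finset.add_sum_erase _ _ (Finset.mem_univ i), add_assoc, add_sub_cancel_left]
  exact (IsSumSq.sum fun i _ => isSumSq_theta_term k i).add
    (IsSumSq.sum fun k _ => IsSumSq.sum fun i _ => isSumSq_theta_term k i)

theorem isSumSq_mul_theta_sub_mono {n r s : ℕ} {p : MvPolynomial (Fin n) ℝ} {t u : ℝ}
    (hp : IsSumSq (C t * theta n r - p)) (ht : 0 ≤ t) (htu : t ≤ u) (hrs : r ≤ s) :
    IsSumSq (C u * theta n s - p) := by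
  have split : C u * theta n s - p = (C t * theta n r - p) +
      (C t * (theta n s - theta n r) + C (u - t) * theta n s) := by
    rw [C_sub]; ring
  rw [split]
  exact hp.add ((isSumSq_C_mul (isSumSq_theta_sub_theta hrs) ht).add
    (isSumSq_C_mul (isSumSq_theta n s) (sub_nonneg.2 htu)))

/-- `p` lies below a nonnegative multiple of some `θ_r` in the sum-of-squares order. -/
def ThetaDominated {n : ℕ} (p : MvPolynomial (Fin n) ℝ) : Prop :=
  ∃ (t : ℝ) (r : ℕ), 0 ≤ t ∧ IsSumSq (C t * theta n r - p)

namespace ThetaDominated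

variable {n : ℕ} {p q : MvPolynomial (Fin n) ℝ}

theorem add (hp : ThetaDominated p) (hq : ThetaDominated q) : ThetaDominated (p + q) := by
  obtain ⟨t, r, ht, hp⟩ := hp
  obtain ⟨u, s, hu, hq⟩ := hq
  refine ⟨t + u, max r s, add_nonneg ht hu, ?_⟩
  have split : C (t + u) * theta n (max r s) - (p + q) =
      (C t * theta n (max r s) - p) + (C u * theta n (max r s) - q) := by
    rw [C_add]; ring
  rw [split]
  exact (isSumSq_mul_theta_sub_mono hp ht le_rfl (le_max_left r s)).add
    (isSumSq_mul_theta_sub_mono hq hu le_rfl (le_max_right r s))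

theorem C_mul (hp : ThetaDominated p) {c : ℝ} (hc : 0 ≤ c) : ThetaDominated (C c * p) := by
  obtain ⟨t, r, ht, hp⟩ := hp
  refine ⟨c * t, r, mul_nonneg hc ht, ?_⟩
  convert isSumSq_C_mul hp hc using 1
  rw [MvPolynomial.C_mul]; ring

theorem mono (hp : ThetaDominated p) (hpq : IsSumSq (p - q)) : ThetaDominated q := by
  obtain ⟨t, r, ht, hp⟩ := hp
  exact ⟨t, r, ht, by simpa using hp.add hpq⟩

theorem X_pow (i : Fin n) (k : ℕ) : ThetaDominated (X i ^ (2 * k)) := by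
  have h := isSumSq_C_mul (isSumSq_theta_sub_term k i) (Nat.cast_nonneg (α := ℝ) k.factorial)
  refine ⟨k.factorial, k, by positivity, ?_⟩
  rwa [mul_sub, ← mul_assoc (C _) (C _), ← MvPolynomial.C_mul,
    mul_one_div_cancel (by positivity), C_1, one_mul] at h

theorem mul (hp : ThetaDominated (p ^ 2)) (hq : ThetaDominated (q ^ 2)) :
    ThetaDominated (p * q) := by
  refine ((hp.add hq).C_mul (c := 1 / 2) (by norm_num)).mono ?_
  have amgm : C (1 / 2) * (p ^ 2 + q ^ 2) - p * q = C (1 / 2) * ((p - q) * (p - q)) := by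
    have : (C (1 / 2) * 2 : MvPolynomial (Fin n) ℝ) = 1 := by
      rw [← map_ofNat C 2, ← MvPolynomial.C_mul]; norm_num
    linear_combination p * q * this
  rw [amgm]
  exact isSumSq_C_mul (IsSumSq.mul_self _) (by norm_num)

theorem monomial_pow [NeZero n] (α : Fin n →₀ ℕ) :
    ∀ k : ℕ, ThetaDominated (monomial α (1 : ℝ) ^ (2 * k)) := by
  induction α using Finsupp.induction_linear with
  | zero => exact fun k => by simpa using X_pow (0 : Fin n) 0
  | add α β hα hβ =>
    intro k
    have hmul : (monomial (α + β) (1 : ℝ)) ^ (2 * k) =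
        monomial α 1 ^ (2 * k) * monomial β 1 ^ (2 * k) := by
      rw [← mul_pow, monomial_mul, one_mul]
    rw [hmul]
    exact mul (by simpa [← pow_mul, mul_assoc, mul_comm 2] using hα (2 * k))
      (by simpa [← pow_mul, mul_assoc, mul_comm 2] using hβ (2 * k))
  | single i a =>
    intro k
    convert X_pow i (a * k) using 1
    rw [← X_pow_eq_monomial, ← pow_mul]; ring

theorem of_neZero [NeZero n] (p : MvPolynomial (Fin n) ℝ) : ThetaDominated p := by
  induction p using MvPolynomial.induction_on' with
  | monomial α a =>
    have hconst : ThetaDominated (C (a ^ 2) : MvPolynomial (Fin n) ℝ) := by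
      simpa using (X_pow (0 : Fin n) 0).C_mul (sq_nonneg a)
    rw [← mul_one a, ← C_mul_monomial]
    exact mul (by simpa using hconst) (by simpa using monomial_pow α 1)
  | add p q hp hq => exact hp.add hq

end ThetaDominated

/-! ### Separation by a positive functional -/

theorem exists_linearMap_le_one_of_convex_of_notMem {E : Type*} [AddCommGroup E] [Module ℝ E]
    {s : Set E} (hs : Convex ℝ s) (habs : Absorbent ℝ s) {x : E} (hx : x ∉ s) :
    ∃ L : E →ₗ[ℝ] ℝ, (∀ y ∈ s, L y ≤ 1) ∧ 1 ≤ L x := by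
  have h0 : (0 : E) ∈ s := habs.zero_mem
  have hx0 : x ≠ 0 := fun h => hx (h ▸ h0)
  let f : E →ₗ.[ℝ] ℝ := LinearPMap.mkSpanSingleton x (gauge s x) hx0
  have hf : ∀ y : f.domain, f y ≤ gauge s y := by
    rintro ⟨y, hy⟩
    obtain ⟨c, rfl⟩ := Submodule.mem_span_singleton.1 hy
    rw [LinearPMap.mkSpanSingleton'_apply]
    rcases le_total 0 c with hc | hc
    · simp [gauge_smul_of_nonneg hc]
    · exact (mul_nonpos_of_nonpos_of_nonneg hc (gauge_nonneg x)).trans (gauge_nonneg _)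
  obtain ⟨L, hLx, hLs⟩ := exists_extension_of_le_sublinear f (gauge s)
    (fun c hc y => gauge_smul_of_nonneg hc.le y) (gauge_add_le hs habs) hf
  refine ⟨L, fun y hy => (hLs y).trans (gauge_le_one_of_mem hy), ?_⟩
  have hLx' : L x = gauge s x :=
    (hLx ⟨x, Submodule.mem_span_singleton_self x⟩).trans
      (LinearPMap.mkSpanSingleton_apply ℝ ℝ hx0 _)
  rw [hLx']
  exact one_le_gauge_of_notMem (hs.starConvex h0) (habs.absorbs (x := x)) hx

/-- The set of polynomials lying below some `θ_r` in the sum-of-squares order; its gauge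
is the sublinear functional used for separation. -/
def thetaLowerSet (n : ℕ) : Set (MvPolynomial (Fin n) ℝ) :=
  {p | ∃ r, IsSumSq (theta n r - p)}

theorem convex_thetaLowerSet (n : ℕ) : Convex ℝ (thetaLowerSet n) := by
  rintro p ⟨r, hp⟩ q ⟨s, hq⟩ a b ha hb hab
  have hp' := hp.add (isSumSq_theta_sub_theta (le_max_left r s))
  have hq' := hq.add (isSumSq_theta_sub_theta (le_max_right r s))
  rw [sub_add_sub_cancel'] at hp' hq'
  have split : theta n (max r s) - (a • p + b • q) =
      C a * (theta n (max r s) - p) + C b * (theta n (max r s) - q) := by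
    have hab' : (C a + C b : MvPolynomial (Fin n) ℝ) = 1 := by rw [← C_add, hab, C_1]
    rw [smul_eq_C_mul, smul_eq_C_mul]
    linear_combination -theta n (max r s) * hab'
  refine ⟨max r s, ?_⟩
  rw [split]
  exact (isSumSq_C_mul hp' ha).add (isSumSq_C_mul hq' hb)

theorem absorbent_thetaLowerSet (n : ℕ) [NeZero n] : Absorbent ℝ (thetaLowerSet n) := by
  have key (p : MvPolynomial (Fin n) ℝ) : ∃ t : ℝ, ∀ c, 0 < c → t ≤ c →
      c⁻¹ • p ∈ thetaLowerSet n := by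
    obtain ⟨t, r, ht, hp⟩ := ThetaDominated.of_neZero p
    refine ⟨t, fun c hc htc => ⟨r, ?_⟩⟩
    convert isSumSq_C_mul (isSumSq_mul_theta_sub_mono hp ht htc le_rfl) (inv_nonneg.2 hc.le)
      using 1
    rw [mul_sub, ← mul_assoc, ← C_mul, inv_mul_cancel₀ hc.ne', C_1, one_mul, smul_eq_C_mul]
  intro p
  obtain ⟨t, ht⟩ := key p
  obtain ⟨u, hu⟩ := key (-p)
  refine absorbs_iff_norm.2 ⟨max 1 (max t u), fun c hc => Set.singleton_subset_iff.2 ?_⟩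
  simp only [Real.norm_eq_abs, max_le_iff] at hc
  obtain ⟨hc1, hct, hcu⟩ := hc
  have hc0 : 0 < |c| := one_pos.trans_le hc1
  rw [Set.mem_smul_set_iff_inv_smul_mem₀ (abs_pos.1 hc0)]
  rcases abs_choice c with h | h <;> rw [h] at hc0 hct hcu
  · exact ht c hc0 hct
  · simpa [inv_neg] using hu (-c) hc0 hcu

/-- A value `L (q²) < 0` would make `L` unbounded on the negative multiples of `q²`, which all
lie in `thetaLowerSet n`. -/
theorem map_mul_self_nonneg_of_le_one {n : ℕ} {L : MvPolynomial (Fin n) ℝ →ₗ[ℝ] ℝ}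
    (hL : ∀ p ∈ thetaLowerSet n, L p ≤ 1) (q : MvPolynomial (Fin n) ℝ) : 0 ≤ L (q * q) := by
  by_contra! hneg
  have hmem : (-2 / -L (q * q)) • (q * q) ∈ thetaLowerSet n := by
    have split : theta n 0 - (-2 / -L (q * q)) • (q * q) =
        theta n 0 + C (2 / -L (q * q)) * (q * q) := by
      rw [smul_eq_C_mul, neg_div, C_neg]; ring
    refine ⟨0, ?_⟩
    rw [split]
    exact (isSumSq_theta n 0).add (isSumSq_C_mul (IsSumSq.mul_self q)
      (div_nonneg zero_le_two (neg_nonneg.2 hneg.le)))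
  have h := hL _ hmem
  rw [map_smul, smul_eq_mul, neg_div_neg_eq, div_mul_cancel₀ _ hneg.ne] at h
  norm_num at h

theorem exists_linearMap_neg_of_forall_not_isSumSq {n : ℕ} [NeZero n]
    {f : MvPolynomial (Fin n) ℝ} {ε : ℝ} (hε : 0 < ε)
    (hf : ∀ r, ¬ IsSumSq (f + C ε * theta n r)) :
    ∃ L : MvPolynomial (Fin n) ℝ →ₗ[ℝ] ℝ,
      (∀ p, 0 ≤ L (p * p)) ∧ (∀ r, L (theta n r) ≤ 1) ∧ L f < 0 := by
  have hmem : -(ε⁻¹ • f) ∉ thetaLowerSet n := by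
    rintro ⟨r, hr⟩
    apply hf r
    convert isSumSq_C_mul hr hε.le using 1
    have : (C ε * C ε⁻¹ : MvPolynomial (Fin n) ℝ) = 1 := by
      rw [← C_mul, mul_inv_cancel₀ hε.ne', C_1]
    rw [smul_eq_C_mul]
    linear_combination -f * this
  obtain ⟨L, hL, hLf⟩ := exists_linearMap_le_one_of_convex_of_notMem
    (convex_thetaLowerSet n) (absorbent_thetaLowerSet n) hmem
  refine ⟨L, map_mul_self_nonneg_of_le_one hL, fun r => hL _ ⟨r, by simp⟩, ?_⟩
  rw [map_neg, map_smul, smul_eq_mul] at hLf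
  have : ε⁻¹ * L f < 0 := by linarith
  exact (pos_iff_neg_of_mul_neg this).1 (inv_pos.2 hε)

/-! ### Bernstein approximation on the cube -/

section Bernstein

variable {σ : Type*} [Fintype σ]

/-- The tensor product Bernstein polynomial with exponents `k i` in the variables `X i`. -/
noncomputable def bernsteinProd (m : ℕ) (k : σ → Fin (m + 1)) : MvPolynomial σ ℝ :=
  ∏ i, Polynomial.aeval (X i) (bernsteinPolynomial ℝ m (k i))

theorem X_mul_one_sub_X_mul_derivative_bernsteinPolynomial {m k : ℕ} (hk : k ≤ m) :
    Polynomial.X * (1 - Polynomial.X) * Polynomial.derivative (bernsteinPolynomial ℝ m k) =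
      ((k : Polynomial ℝ) - (m : Polynomial ℝ) * Polynomial.X) * bernsteinPolynomial ℝ m k := by
  obtain ⟨l, rfl⟩ := Nat.exists_eq_add_of_le hk
  have hpow (q : Polynomial ℝ) (j : ℕ) : q * Polynomial.derivative (q ^ j) =
      (j : Polynomial ℝ) * q ^ j * Polynomial.derivative q := by
    cases j with
    | zero => simp
    | succ j => rw [Polynomial.derivative_pow, Nat.add_sub_cancel, map_natCast]; ring
  have hX := hpow Polynomial.X k
  have hY := hpow (1 - Polynomial.X) l
  rw [Polynomial.derivative_X] at hX
  rw [Polynomial.derivative_sub, Polynomial.derivative_one, Polynomial.derivative_X] at hY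
  rw [bernsteinPolynomial, Nat.add_sub_cancel_left, Polynomial.derivative_mul,
    Polynomial.derivative_mul, Polynomial.derivative_natCast, Nat.cast_add]
  linear_combination
    ((k + l).choose k : Polynomial ℝ) * (1 - Polynomial.X) ^ l * (1 - Polynomial.X) * hX +
    ((k + l).choose k : Polynomial ℝ) * Polynomial.X ^ k * Polynomial.X * hY

theorem X_mul_one_sub_X_mul_pderiv_bernsteinProd (m : ℕ) (k : σ → Fin (m + 1)) (i : σ) :
    X i * (1 - X i) * pderiv i (bernsteinProd m k) =
      (C (k i : ℝ) - C (m : ℝ) * X i) * bernsteinProd m k := by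
  classical
  let b : σ → MvPolynomial σ ℝ :=
    fun j => Polynomial.aeval (X j) (bernsteinPolynomial ℝ m (k j))
  have hother : pderiv i (∏ j ∈ Finset.univ.erase i, b j) = 0 := by
    refine Finset.prod_induction b (fun p => pderiv i p = 0)
      (fun p q hp hq => by rw [Derivation.leibniz, hp, hq, smul_zero, smul_zero, add_zero])
      (Derivation.map_one_eq_zero _) fun j hj => ?_
    rw [Derivation.map_aeval, pderiv_X_of_ne (Finset.ne_of_mem_erase hj), smul_zero]
  have hself : X i * (1 - X i) * pderiv i (b i) = (C (k i : ℝ) - C (m : ℝ) * X i) * b i := by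
    have h := congrArg (Polynomial.aeval (R := ℝ) (X i : MvPolynomial σ ℝ))
      (X_mul_one_sub_X_mul_derivative_bernsteinPolynomial (Fin.is_le (k i)))
    simp only [map_mul, map_sub, map_one, map_natCast, Polynomial.aeval_X] at h
    rw [Derivation.map_aeval, pderiv_X_self, smul_eq_mul, mul_one, h, map_natCast, map_natCast]
  rw [bernsteinProd, ← Finset.mul_prod_erase _ _ (Finset.mem_univ i), Derivation.leibniz, hother,
    smul_zero, zero_add, smul_eq_mul]
  linear_combination (∏ j ∈ Finset.univ.erase i, b j) * hself

variable [DecidableEq σ]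

theorem sum_bernsteinProd (m : ℕ) : ∑ k : σ → Fin (m + 1), bernsteinProd m k = 1 := by
  simp only [bernsteinProd]
  rw [← Fintype.prod_sum fun i (j : Fin (m + 1)) =>
    Polynomial.aeval (X i : MvPolynomial σ ℝ) (bernsteinPolynomial ℝ m j)]
  refine Finset.prod_eq_one fun i _ => ?_
  rw [← map_sum, Fin.sum_univ_eq_sum_range (bernsteinPolynomial ℝ m), bernsteinPolynomial.sum,
    map_one]

/-- The Bernstein operator of order `m` on the cube `[0, 1]^σ`, applied to a polynomial. -/
noncomputable def bernsteinOperator (m : ℕ) (P : MvPolynomial σ ℝ) : MvPolynomial σ ℝ :=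
  ∑ k : σ → Fin (m + 1), C (eval (fun i => (k i : ℝ) / m) P) * bernsteinProd m k

theorem bernsteinOperator_C (m : ℕ) (a : ℝ) :
    bernsteinOperator m (C a : MvPolynomial σ ℝ) = C a := by
  simp only [bernsteinOperator, eval_C, ← Finset.mul_sum, sum_bernsteinProd, mul_one]

theorem bernsteinOperator_add (m : ℕ) (P Q : MvPolynomial σ ℝ) :
    bernsteinOperator m (P + Q) = bernsteinOperator m P + bernsteinOperator m Q := by
  simp only [bernsteinOperator, map_add, add_mul, Finset.sum_add_distrib]

theorem bernsteinOperator_mul_X {m : ℕ} (hm : m ≠ 0) (P : MvPolynomial σ ℝ) (i : σ) :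
    bernsteinOperator m (P * X i) = X i * bernsteinOperator m P +
      (m : ℝ)⁻¹ • (X i * (1 - X i) * pderiv i (bernsteinOperator m P)) := by
  simp only [bernsteinOperator, map_sum, Finset.mul_sum, Finset.smul_sum,
    ← Finset.sum_add_distrib]
  refine Finset.sum_congr rfl fun k _ => ?_
  have hm' : (C (m : ℝ)⁻¹ * C (m : ℝ) : MvPolynomial σ ℝ) = 1 := by
    rw [← C_mul, inv_mul_cancel₀ (by positivity), C_1]
  generalize hc : eval (fun i => (k i : ℝ) / m) P = c
  rw [map_mul, eval_X, hc, div_eq_inv_mul, pderiv_C_mul, smul_eq_C_mul, C_mul, C_mul]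
  linear_combination
    -C (m : ℝ)⁻¹ * C c * X_mul_one_sub_X_mul_pderiv_bernsteinProd m k i +
      C c * X i * bernsteinProd m k * hm'

/-- Quantifying over `φ` after `P` lets the induction on `P` absorb the multiplications and the
derivative in `bernsteinOperator_mul_X` into `φ`. -/
theorem tendsto_map_bernsteinOperator (P : MvPolynomial σ ℝ) :
    ∀ φ : MvPolynomial σ ℝ →ₗ[ℝ] ℝ,
      Tendsto (fun m => φ (bernsteinOperator m P)) atTop (𝓝 (φ P)) := by
  induction P using MvPolynomial.induction_on with
  | C a => simp [bernsteinOperator_C]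
  | add P Q hP hQ => simpa [bernsteinOperator_add] using fun φ => (hP φ).add (hQ φ)
  | mul_X P i hP =>
    intro φ
    have hmul := hP (φ ∘ₗ LinearMap.mulLeft ℝ (X i))
    have hder := hP (φ ∘ₗ LinearMap.mulLeft ℝ (X i * (1 - X i)) ∘ₗ (pderiv i).toLinearMap)
    have hlim := hmul.add ((tendsto_inv_atTop_nhds_zero_nat (𝕜 := ℝ)).mul hder)
    rw [zero_mul, add_zero, LinearMap.comp_apply, LinearMap.mulLeft_apply,
      mul_comm (X i) P] at hlim
    refine hlim.congr' ?_
    filter_upwards [eventually_ne_atTop 0] with m hm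
    simp [bernsteinOperator_mul_X hm, mul_assoc]

end Bernstein

/-- An algebraic form of Hausdorff's moment theorem on the cube. -/
theorem map_aeval_nonneg_of_forall_Icc {σ A : Type*} [Finite σ] [CommRing A] [Algebra ℝ A]
    {Λ : A →ₗ[ℝ] ℝ} (hΛ : ∀ a, IsSumSq a → 0 ≤ Λ a) {y : σ → A}
    (hy : ∀ i, IsSumSq (y i)) (hy' : ∀ i, IsSumSq (1 - y i)) {P : MvPolynomial σ ℝ}
    (hP : ∀ x ∈ Set.Icc (0 : σ → ℝ) 1, 0 ≤ eval x P) : 0 ≤ Λ (aeval y P) := by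
  classical
  have := Fintype.ofFinite σ
  refine ge_of_tendsto' (tendsto_map_bernsteinOperator P (Λ ∘ₗ (aeval y).toLinearMap))
    fun m => hΛ _ ?_
  have hbasis (k : σ → Fin (m + 1)) : IsSumSq (aeval y (bernsteinProd m k)) := by
    have hpow {a : A} (ha : IsSumSq a) (j : ℕ) : IsSumSq (a ^ j) :=
      Subsemiring.mem_sumSq.1 (pow_mem (Subsemiring.mem_sumSq.2 ha) j)
    rw [bernsteinProd, map_prod]
    refine IsSumSq.prod fun i _ => ?_
    simp only [bernsteinPolynomial, map_mul, map_pow, map_sub, map_one, map_natCast,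
      Polynomial.aeval_X, aeval_X]
    exact ((IsSumSq.natCast _).mul (hpow (hy i) _)).mul (hpow (hy' i) _)
  have hnode (k : σ → Fin (m + 1)) : (fun i => (k i : ℝ) / m) ∈ Set.Icc (0 : σ → ℝ) 1 :=
    ⟨fun i => by positivity, fun i => div_le_one_of_le₀ (by simp [Fin.is_le]) (by positivity)⟩
  simp only [AlgHom.toLinearMap_apply, bernsteinOperator, map_sum, map_mul, algHom_C]
  exact IsSumSq.sum fun k _ => (isSumSq_algebraMap (hP _ (hnode k))).mul (hbasis k)

section MomentNorm

variable {A : Type*} [CommRing A] [Algebra ℝ A] {L : A →ₗ[ℝ] ℝ}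

theorem map_mul_sq_le_of_map_mul_self_nonneg (hL : ∀ a, 0 ≤ L (a * a)) (a b : A) :
    L (a * b) ^ 2 ≤ L (a * a) * L (b * b) := by
  have hquad (t : ℝ) : 0 ≤ L (a * a) * (t * t) + 2 * L (a * b) * t + L (b * b) := by
    have hexp : (t • a + b) * (t • a + b) = (t * t) • (a * a) + (2 * t) • (a * b) + b * b := by
      simp only [Algebra.smul_def, map_mul, map_ofNat]; ring
    have h := hL (t • a + b)
    rw [hexp, map_add, map_add, map_smul, map_smul, smul_eq_mul, smul_eq_mul] at h
    linarith
  have h := discrim_le_zero hquad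
  rw [discrim] at h
  linarith

/-- The quantity `|L (a ^ 2^s)| ^ (1 / 2^s)`, an analogue of the `L^p`-norm of `a` for `p = 2^s`
and the "integral" `L`. -/
noncomputable def momentNorm (L : A →ₗ[ℝ] ℝ) (s : ℕ) (a : A) : ℝ :=
  |L (a ^ 2 ^ s)| ^ ((2 : ℝ) ^ s)⁻¹

theorem momentNorm_nonneg (L : A →ₗ[ℝ] ℝ) (s : ℕ) (a : A) : 0 ≤ momentNorm L s a :=
  Real.rpow_nonneg (abs_nonneg _) _

theorem momentNorm_zero (L : A →ₗ[ℝ] ℝ) (a : A) : momentNorm L 0 a = |L a| := by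
  simp [momentNorm]

theorem momentNorm_mul_le (hL : ∀ a, 0 ≤ L (a * a)) (s : ℕ) (a b : A) :
    momentNorm L s (a * b) ≤ momentNorm L (s + 1) a * momentNorm L (s + 1) b := by
  have hcs : |L ((a * b) ^ 2 ^ s)| ^ (2 : ℝ) ≤ |L (a ^ 2 ^ (s + 1))| * |L (b ^ 2 ^ (s + 1))| := by
    rw [Real.rpow_two, sq_abs, ← abs_mul, mul_pow, pow_succ 2 s, mul_two, pow_add, pow_add]
    exact (map_mul_sq_le_of_map_mul_self_nonneg hL _ _).trans (le_abs_self _)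
  have hexp : ((2 : ℝ) ^ s)⁻¹ = 2 * ((2 : ℝ) ^ (s + 1))⁻¹ := by
    rw [pow_succ]; field_simp
  calc momentNorm L s (a * b)
      = (|L ((a * b) ^ 2 ^ s)| ^ (2 : ℝ)) ^ ((2 : ℝ) ^ (s + 1))⁻¹ := by
        rw [momentNorm, hexp, Real.rpow_mul (abs_nonneg _)]
    _ ≤ (|L (a ^ 2 ^ (s + 1))| * |L (b ^ 2 ^ (s + 1))|) ^ ((2 : ℝ) ^ (s + 1))⁻¹ := by
        gcongr
    _ = momentNorm L (s + 1) a * momentNorm L (s + 1) b := by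
        rw [momentNorm, momentNorm, Real.mul_rpow (abs_nonneg _) (abs_nonneg _)]

end MomentNorm

/-! ### Extension of a positive functional to power series -/

theorem map_nonneg_of_isSumSq {A : Type*} [NonUnitalNonAssocSemiring A] [Module ℝ A]
    {L : A →ₗ[ℝ] ℝ} (hL : ∀ a, 0 ≤ L (a * a)) {a : A} (ha : IsSumSq a) : 0 ≤ L a := by
  induction ha with
  | zero => rw [map_zero]
  | sq_add a _ ih => rw [map_add]; exact add_nonneg (hL a) ih

section MomentSummable

variable {σ : Type*} {L : MvPolynomial σ ℝ →ₗ[ℝ] ℝ} {F G : MvPowerSeries σ ℝ}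

/-- The power series whose monomials are absolutely summable in every `momentNorm L s`, to which
`L` extends termwise. All `s` are required because `momentNorm_mul_le` raises `s` by one: this
makes the series into an algebra. -/
def MomentSummable (L : MvPolynomial σ ℝ →ₗ[ℝ] ℝ) (F : MvPowerSeries σ ℝ) : Prop :=
  ∀ s : ℕ, Summable fun α => |MvPowerSeries.coeff α F| * momentNorm L s (monomial α 1)

theorem MomentSummable.of_abs_coeff_le (hG : MomentSummable L G)
    (h : ∀ α, |MvPowerSeries.coeff α F| ≤ |MvPowerSeries.coeff α G|) : MomentSummable L F :=
  fun s => (hG s).of_nonneg_of_le (fun _ => mul_nonneg (abs_nonneg _) (momentNorm_nonneg ..))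
    fun α => mul_le_mul_of_nonneg_right (h α) (momentNorm_nonneg ..)

theorem MomentSummable.add (hF : MomentSummable L F) (hG : MomentSummable L G) :
    MomentSummable L (F + G) := fun s => by
  refine ((hF s).add (hG s)).of_nonneg_of_le
    (fun _ => mul_nonneg (abs_nonneg _) (momentNorm_nonneg ..)) fun α => ?_
  rw [map_add, ← add_mul]
  exact mul_le_mul_of_nonneg_right (abs_add_le _ _) (momentNorm_nonneg ..)

/-- The series whose coefficients are the absolute values of those of `F`. -/
def absCoeff (F : MvPowerSeries σ ℝ) : MvPowerSeries σ ℝ :=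
  fun α => |MvPowerSeries.coeff α F|

theorem coeff_absCoeff (F : MvPowerSeries σ ℝ) (α : σ →₀ ℕ) :
    MvPowerSeries.coeff α (absCoeff F) = |MvPowerSeries.coeff α F| := rfl

theorem MomentSummable.absCoeff (hF : MomentSummable L F) : MomentSummable L (absCoeff F) :=
  hF.of_abs_coeff_le fun α => by rw [coeff_absCoeff, abs_abs]

theorem abs_coeff_mul_le [DecidableEq σ] (F G : MvPowerSeries σ ℝ) (α : σ →₀ ℕ) :
    |MvPowerSeries.coeff α (F * G)| ≤ ∑ p ∈ Finset.HasAntidiagonal.antidiagonal α,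
      |MvPowerSeries.coeff p.1 F| * |MvPowerSeries.coeff p.2 G| := by
  rw [MvPowerSeries.coeff_mul]
  exact (Finset.abs_sum_le_sum_abs _ _).trans_eq (by simp only [abs_mul])

theorem momentNorm_monomial_add_le (hL : ∀ p, 0 ≤ L (p * p)) (s : ℕ) (α β : σ →₀ ℕ) :
    momentNorm L s (monomial (α + β) 1) ≤
      momentNorm L (s + 1) (monomial α 1) * momentNorm L (s + 1) (monomial β 1) := by
  rw [← mul_one (1 : ℝ), ← monomial_mul, mul_one]
  exact momentNorm_mul_le hL s _ _

theorem MomentSummable.mul (hL : ∀ p, 0 ≤ L (p * p)) (hF : MomentSummable L F)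
    (hG : MomentSummable L G) : MomentSummable L (F * G) := fun s => by
  classical
  let w (t : ℕ) (α : σ →₀ ℕ) : ℝ := momentNorm L t (monomial α 1)
  have hw (t : ℕ) (α : σ →₀ ℕ) : 0 ≤ w t α := momentNorm_nonneg ..
  let a (H : MvPowerSeries σ ℝ) (α : σ →₀ ℕ) : ℝ := |MvPowerSeries.coeff α H| * w (s + 1) α
  have ha (H : MvPowerSeries σ ℝ) : 0 ≤ a H := fun α => mul_nonneg (abs_nonneg _) (hw _ _)
  have hsum : Summable fun x : (σ →₀ ℕ) × (σ →₀ ℕ) => a F x.1 * a G x.2 :=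
    (hF (s + 1)).mul_of_nonneg (hG (s + 1)) (ha F) (ha G)
  refine (summable_sum_mul_antidiagonal_of_summable_mul hsum).of_nonneg_of_le
    (fun α => mul_nonneg (abs_nonneg _) (hw s α)) fun α => ?_
  refine (mul_le_mul_of_nonneg_right (abs_coeff_mul_le F G α) (hw s α)).trans ?_
  rw [Finset.sum_mul]
  refine Finset.sum_le_sum fun p hp => ?_
  have hsub : w s α ≤ w (s + 1) p.1 * w (s + 1) p.2 := by
    rw [← Finset.HasAntidiagonal.mem_antidiagonal.1 hp]
    exact momentNorm_monomial_add_le hL s p.1 p.2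
  rw [mul_mul_mul_comm]
  exact mul_le_mul_of_nonneg_left hsub (mul_nonneg (abs_nonneg _) (abs_nonneg _))

theorem momentSummable_coe (p : MvPolynomial σ ℝ) : MomentSummable L (p : MvPowerSeries σ ℝ) :=
  fun s => summable_of_ne_finset_zero (s := p.support) fun α hα => by
    rw [coeff_coe, notMem_support_iff.1 hα, abs_zero, zero_mul]

/-- The algebra of series on which the extension of `L` is defined. -/
def momentSubalgebra (L : MvPolynomial σ ℝ →ₗ[ℝ] ℝ) (hL : ∀ p, 0 ≤ L (p * p)) :
    Subalgebra ℝ (MvPowerSeries σ ℝ) where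
  carrier := {F | MomentSummable L F}
  mul_mem' := MomentSummable.mul hL
  add_mem' := MomentSummable.add
  algebraMap_mem' c := by
    rw [MvPowerSeries.algebraMap_apply, Algebra.algebraMap_self_apply, ← coe_C]
    exact momentSummable_coe (C c)

theorem MomentSummable.summable (hF : MomentSummable L F) :
    Summable fun α => MvPowerSeries.coeff α F * L (monomial α 1) := by
  refine .of_norm ?_
  simpa only [momentNorm_zero, norm_mul, Real.norm_eq_abs] using hF 0

/-- The value on `F` of the termwise extension of `L` to power series. -/
noncomputable def momentTsum (L : MvPolynomial σ ℝ →ₗ[ℝ] ℝ) (F : MvPowerSeries σ ℝ) : ℝ :=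
  ∑' α, MvPowerSeries.coeff α F * L (monomial α 1)

theorem momentTsum_coe (L : MvPolynomial σ ℝ →ₗ[ℝ] ℝ) (p : MvPolynomial σ ℝ) :
    momentTsum L (p : MvPowerSeries σ ℝ) = L p := by
  rw [momentTsum, tsum_eq_sum (s := p.support) fun α hα => by
    rw [coeff_coe, notMem_support_iff.1 hα, zero_mul]]
  conv_rhs => rw [p.as_sum, map_sum]
  refine Finset.sum_congr rfl fun α _ => ?_
  rw [coeff_coe, ← smul_eq_mul, ← map_smul, smul_monomial, smul_eq_mul, mul_one]

/-- `momentTsum L` as a linear form on `momentSubalgebra L hL`. -/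
noncomputable def momentExtension (L : MvPolynomial σ ℝ →ₗ[ℝ] ℝ) (hL : ∀ p, 0 ≤ L (p * p)) :
    momentSubalgebra L hL →ₗ[ℝ] ℝ where
  toFun F := momentTsum L F
  map_add' F G := by
    simp only [momentTsum, Subalgebra.coe_add, map_add, add_mul]
    exact (MomentSummable.summable F.2).tsum_add (MomentSummable.summable G.2)
  map_smul' c F := by
    simp only [momentTsum, Subalgebra.coe_smul, map_smul, smul_eq_mul, mul_assoc, tsum_mul_left,
      RingHom.id_apply]

/-- Coefficientwise convergence, dominated by a series in the domain of the extension of `L`. -/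
structure MomentTendsto {ι : Type*} (L : MvPolynomial σ ℝ →ₗ[ℝ] ℝ) (F : ι → MvPowerSeries σ ℝ)
    (l : Filter ι) (F₀ : MvPowerSeries σ ℝ) : Prop where
  exists_bound : ∃ G, MomentSummable L G ∧
    ∀ᶠ j in l, ∀ α, |MvPowerSeries.coeff α (F j)| ≤ MvPowerSeries.coeff α G
  tendsto_coeff : ∀ α,
    Tendsto (fun j => MvPowerSeries.coeff α (F j)) l (𝓝 (MvPowerSeries.coeff α F₀))

namespace MomentTendsto

variable {ι : Type*} {l : Filter ι} {F G : ι → MvPowerSeries σ ℝ} {F₀ G₀ : MvPowerSeries σ ℝ}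

theorem tendsto_momentTsum (h : MomentTendsto L F l F₀) :
    Tendsto (fun j => momentTsum L (F j)) l (𝓝 (momentTsum L F₀)) := by
  obtain ⟨⟨B, hB, hle⟩, hlim⟩ := h
  refine tendsto_tsum_of_dominated_convergence hB.summable.norm
    (fun α => (hlim α).mul_const _) (hle.mono fun j hj α => ?_)
  rw [norm_mul, norm_mul]
  exact mul_le_mul_of_nonneg_right ((hj α).trans (le_abs_self _)) (norm_nonneg _)

theorem const_coe (p : MvPolynomial σ ℝ) :
    MomentTendsto L (fun _ : ι => (p : MvPowerSeries σ ℝ)) l p where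
  exists_bound := ⟨absCoeff p, (momentSummable_coe p).absCoeff, .of_forall fun _ _ => le_rfl⟩
  tendsto_coeff _ := tendsto_const_nhds

theorem add (hF : MomentTendsto L F l F₀) (hG : MomentTendsto L G l G₀) :
    MomentTendsto L (fun j => F j + G j) l (F₀ + G₀) where
  exists_bound := by
    obtain ⟨A, hA, hFA⟩ := hF.exists_bound
    obtain ⟨B, hB, hGB⟩ := hG.exists_bound
    refine ⟨A + B, hA.add hB, ?_⟩
    filter_upwards [hFA, hGB] with j hj hj' α
    rw [map_add, map_add]
    exact (abs_add_le _ _).trans (add_le_add (hj α) (hj' α))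
  tendsto_coeff α := by
    simpa only [map_add] using (hF.tendsto_coeff α).add (hG.tendsto_coeff α)

theorem mul (hL : ∀ p, 0 ≤ L (p * p)) (hF : MomentTendsto L F l F₀)
    (hG : MomentTendsto L G l G₀) : MomentTendsto L (fun j => F j * G j) l (F₀ * G₀) where
  exists_bound := by
    classical
    obtain ⟨A, hA, hFA⟩ := hF.exists_bound
    obtain ⟨B, hB, hGB⟩ := hG.exists_bound
    refine ⟨A * B, hA.mul hL hB, ?_⟩
    filter_upwards [hFA, hGB] with j hj hj' α
    refine (abs_coeff_mul_le _ _ α).trans ?_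
    rw [MvPowerSeries.coeff_mul]
    exact Finset.sum_le_sum fun p _ =>
      mul_le_mul (hj _) (hj' _) (abs_nonneg _) ((abs_nonneg _).trans (hj _))
  tendsto_coeff α := by
    classical
    simpa only [MvPowerSeries.coeff_mul] using
      tendsto_finsetSum _ fun p _ => (hF.tendsto_coeff p.1).mul (hG.tendsto_coeff p.2)

theorem aeval_coe {τ : Type*} (hL : ∀ p, 0 ≤ L (p * p)) {F : ι → τ → MvPowerSeries σ ℝ}
    {q : τ → MvPolynomial σ ℝ} (hF : ∀ t, MomentTendsto L (fun j => F j t) l (q t))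
    (f : MvPolynomial τ ℝ) :
    MomentTendsto L (fun j => aeval (F j) f) l (aeval q f : MvPolynomial σ ℝ) := by
  induction f using MvPolynomial.induction_on with
  | C a => simpa [MvPowerSeries.algebraMap_apply] using const_coe (C a)
  | add f g hf hg => simpa using hf.add hg
  | mul_X f t hf => simpa using hf.mul hL (hF t)

theorem trunc' [DecidableEq σ] {H : MvPowerSeries σ ℝ} (hH : MomentSummable L H) :
    MomentTendsto L (fun d => (MvPowerSeries.trunc' ℝ d H : MvPowerSeries σ ℝ)) atTop H where
  exists_bound := by
    refine ⟨absCoeff H, hH.absCoeff, .of_forall fun d α => ?_⟩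
    rw [coeff_coe, MvPowerSeries.coeff_trunc', coeff_absCoeff]
    split_ifs
    · exact le_rfl
    · simp
  tendsto_coeff α := by
    refine tendsto_const_nhds.congr' ?_
    filter_upwards [eventually_ge_atTop α] with d hd
    rw [coeff_coe, MvPowerSeries.coeff_trunc', if_pos hd]

end MomentTendsto

theorem momentTsum_mul_self_nonneg (hL : ∀ p, 0 ≤ L (p * p)) (hF : MomentSummable L F) :
    0 ≤ momentTsum L (F * F) := by
  classical
  have hlim := MomentTendsto.trunc' hF
  refine ge_of_tendsto' (hlim.mul hL hlim).tendsto_momentTsum fun d => ?_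
  rw [← coe_mul, momentTsum_coe]
  exact hL _

end MomentSummable

section Growth

variable {A : Type*} [CommRing A] [Algebra ℝ A] {L : A →ₗ[ℝ] ℝ}

theorem momentNorm_pow_le_sqrt (hL : ∀ a, 0 ≤ L (a * a)) {x : A}
    (hx : ∀ k : ℕ, L (x ^ (2 * k)) ≤ k.factorial) (s k : ℕ) :
    momentNorm L (s + 1) (x ^ k) ≤ √((2 ^ s * k : ℝ) ^ k) := by
  have hmoment : |L ((x ^ k) ^ 2 ^ (s + 1))| ≤ ((2 ^ s * k : ℝ) ^ k) ^ 2 ^ s := by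
    have hpow : (x ^ k) ^ 2 ^ (s + 1) = x ^ (2 * (2 ^ s * k)) := by
      rw [← pow_mul]; ring_nf
    have hnonneg : 0 ≤ L (x ^ (2 * (2 ^ s * k))) := by
      rw [two_mul, pow_add]; exact hL _
    rw [hpow, abs_of_nonneg hnonneg]
    calc L (x ^ (2 * (2 ^ s * k))) ≤ ((2 ^ s * k).factorial : ℝ) := hx _
      _ ≤ ((2 ^ s * k : ℕ) : ℝ) ^ (2 ^ s * k) := mod_cast Nat.factorial_le_pow _
      _ = ((2 ^ s * k : ℝ) ^ k) ^ 2 ^ s := by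
        rw [← pow_mul, mul_comm k]; push_cast; rfl
  have hexp : ((2 : ℝ) ^ (s + 1))⁻¹ = ((2 ^ s : ℕ) : ℝ)⁻¹ * (1 / 2) := by
    push_cast; rw [pow_succ]; field_simp
  calc momentNorm L (s + 1) (x ^ k)
      ≤ (((2 ^ s * k : ℝ) ^ k) ^ 2 ^ s) ^ ((2 : ℝ) ^ (s + 1))⁻¹ :=
        Real.rpow_le_rpow (abs_nonneg _) hmoment (by positivity)
    _ = √((2 ^ s * k : ℝ) ^ k) := by
        rw [hexp, Real.rpow_mul (by positivity), Real.pow_rpow_inv_natCast (by positivity)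
          (by positivity), Real.sqrt_eq_rpow]

theorem summable_sqrt_pow_div_factorial {c : ℝ} (hc : 0 ≤ c) :
    Summable fun k : ℕ => √(c ^ k / k.factorial) := by
  have hgeom : Summable fun k : ℕ => (1 / 4 : ℝ) ^ k :=
    summable_geometric_of_lt_one (by norm_num) (by norm_num)
  refine (hgeom.add (Real.summable_pow_div_factorial (4 * c))).of_nonneg_of_le
    (fun _ => Real.sqrt_nonneg _) fun k => ?_
  have hsplit : c ^ k / k.factorial = (1 / 4 : ℝ) ^ k * ((4 * c) ^ k / k.factorial) := by
    rw [← mul_div_assoc, ← mul_pow]; ring_nf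
  have ha : (0 : ℝ) ≤ (1 / 4) ^ k := by positivity
  have hb : 0 ≤ (4 * c) ^ k / (k.factorial : ℝ) := by positivity
  rw [hsplit]
  exact Real.sqrt_le_iff.2 ⟨add_nonneg ha hb, by nlinarith⟩

theorem summable_momentNorm_pow_div_factorial (hL : ∀ a, 0 ≤ L (a * a)) {x : A}
    (hx : ∀ k : ℕ, L (x ^ (2 * k)) ≤ k.factorial) (s : ℕ) :
    Summable fun k : ℕ => 1 / k.factorial * momentNorm L s (x ^ k) := by
  have hc : 0 ≤ 2 ^ s * Real.exp 1 := by positivity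
  refine ((summable_sqrt_pow_div_factorial hc).mul_right (momentNorm L (s + 1) 1)).of_nonneg_of_le
    (fun k => mul_nonneg (by positivity) (momentNorm_nonneg ..)) fun k => ?_
  have hstirling : (k : ℝ) ^ k ≤ Real.exp 1 ^ k * k.factorial := by
    have h := Real.pow_div_factorial_le_exp (k : ℝ) k.cast_nonneg k
    rwa [div_le_iff₀ (by positivity), ← mul_one (k : ℝ), Real.exp_nat_mul, mul_one] at h
  have hterm : 1 / k.factorial * √((2 ^ s * k : ℝ) ^ k) ≤
      √((2 ^ s * Real.exp 1) ^ k / k.factorial) := by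
    refine Real.le_sqrt_of_sq_le ?_
    rw [mul_pow, Real.sq_sqrt (by positivity), mul_pow, mul_pow, le_div_iff₀ (by positivity)]
    calc (1 / (k.factorial : ℝ)) ^ 2 * ((2 ^ s) ^ k * k ^ k) * k.factorial
        = (2 ^ s) ^ k * (k ^ k / k.factorial) := by field_simp
      _ ≤ (2 ^ s) ^ k * Real.exp 1 ^ k := by
        gcongr
        rwa [div_le_iff₀ (by positivity)]
  calc 1 / k.factorial * momentNorm L s (x ^ k)
      ≤ 1 / k.factorial * (momentNorm L (s + 1) (x ^ k) * momentNorm L (s + 1) 1) := by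
        gcongr
        simpa using momentNorm_mul_le hL s (x ^ k) 1
    _ ≤ 1 / k.factorial * (√((2 ^ s * k : ℝ) ^ k) * momentNorm L (s + 1) 1) := by
        gcongr
        · exact momentNorm_nonneg ..
        · exact momentNorm_pow_le_sqrt hL hx s k
    _ ≤ √((2 ^ s * Real.exp 1) ^ k / k.factorial) * momentNorm L (s + 1) 1 := by
        rw [← mul_assoc]
        exact mul_le_mul_of_nonneg_right hterm (momentNorm_nonneg ..)

end Growth

section SubstX

variable {σ : Type*} {L : MvPolynomial σ ℝ →ₗ[ℝ] ℝ}

/-- A univariate power series, viewed as a series in the variable `X i`. -/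
noncomputable def substX (i : σ) : PowerSeries ℝ →ₐ[ℝ] MvPowerSeries σ ℝ :=
  PowerSeries.substAlgHom (PowerSeries.HasSubst.X i)

theorem coeff_substX [DecidableEq σ] (i : σ) (p : PowerSeries ℝ) (α : σ →₀ ℕ) :
    MvPowerSeries.coeff α (substX i p) =
      if α = Finsupp.single i (α i) then PowerSeries.coeff (α i) p else 0 := by
  rw [substX, PowerSeries.coe_substAlgHom, PowerSeries.coeff_subst_single]

theorem momentSummable_substX_exp (hL : ∀ p, 0 ≤ L (p * p)) {i : σ}
    (hi : ∀ k : ℕ, L (X i ^ (2 * k)) ≤ k.factorial) :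
    MomentSummable L (substX i (PowerSeries.exp ℝ)) := fun s => by
  classical
  refine (Function.Injective.summable_iff (Finsupp.single_injective i) fun α hα => ?_).1 ?_
  · rw [coeff_substX, if_neg fun h => hα ⟨α i, h.symm⟩, abs_zero, zero_mul]
  · convert summable_momentNorm_pow_div_factorial hL hi s using 2 with k
    simp [coeff_substX, X_pow_eq_monomial, PowerSeries.coeff_exp]

theorem abs_coeff_substX_le {p q : PowerSeries ℝ}
    (h : ∀ k, |PowerSeries.coeff k p| ≤ PowerSeries.coeff k q) (i : σ) (α : σ →₀ ℕ) :
    |MvPowerSeries.coeff α (substX i p)| ≤ MvPowerSeries.coeff α (substX i q) := by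
  classical
  rw [coeff_substX, coeff_substX]
  split_ifs
  · exact h _
  · rw [abs_zero]

theorem momentTendsto_substX {ι : Type*} {l : Filter ι} {i : σ} {p : ι → PowerSeries ℝ}
    {p₀ q : PowerSeries ℝ} (hq : MomentSummable L (substX i q))
    (hp : ∀ᶠ j in l, ∀ k, |PowerSeries.coeff k (p j)| ≤ PowerSeries.coeff k q)
    (hlim : ∀ k, Tendsto (fun j => PowerSeries.coeff k (p j)) l (𝓝 (PowerSeries.coeff k p₀))) :
    MomentTendsto L (fun j => substX i (p j)) l (substX i p₀) where
  exists_bound := ⟨_, hq, hp.mono fun _ hj => abs_coeff_substX_le hj i⟩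
  tendsto_coeff α := by
    classical
    simp only [coeff_substX]
    split_ifs
    · exact hlim _
    · exact tendsto_const_nhds

end SubstX

/-! ### The approximations `sin (g x) cos (g x) / g` of `x` -/

section Trigonometric

variable (A : Type*) [CommRing A] [Algebra ℚ A]

theorem derivative_powerSeries_sin :
    PowerSeries.derivative A (PowerSeries.sin A) = PowerSeries.cos A := by
  ext k
  rw [PowerSeries.coeff_derivative, PowerSeries.sin, PowerSeries.cos, PowerSeries.coeff_mk,
    PowerSeries.coeff_mk]
  rcases Nat.even_or_odd' k with ⟨m, rfl | rfl⟩
  · have hhalf : (2 * m + 1) / 2 = 2 * m / 2 := by omega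
    rw [if_neg (by simp), if_pos (even_two_mul m), hhalf, Nat.factorial_succ,
      ← map_natCast (algebraMap ℚ A), ← map_one (algebraMap ℚ A), ← map_add, ← map_mul]
    congr 1
    push_cast
    field_simp
  · rw [if_pos (odd_two_mul_add_one m).add_one, if_neg (by simp), zero_mul]

theorem derivative_powerSeries_cos :
    PowerSeries.derivative A (PowerSeries.cos A) = -PowerSeries.sin A := by
  ext k
  rw [PowerSeries.coeff_derivative, map_neg, PowerSeries.sin, PowerSeries.cos,
    PowerSeries.coeff_mk, PowerSeries.coeff_mk]
  rcases Nat.even_or_odd' k with ⟨m, rfl | rfl⟩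
  · rw [if_neg (by simp), if_pos (even_two_mul m), zero_mul, neg_zero]
  · have hhalf : (2 * m + 1 + 1) / 2 = (2 * m + 1) / 2 + 1 := by omega
    rw [if_pos (odd_two_mul_add_one m).add_one, if_neg (by simp), hhalf, pow_succ,
      Nat.factorial_succ (2 * m + 1), ← map_natCast (algebraMap ℚ A), ← map_one (algebraMap ℚ A),
      ← map_add, ← map_mul, ← map_neg]
    congr 1
    push_cast
    field_simp

theorem powerSeries_sin_sq_add_cos_sq : PowerSeries.sin A ^ 2 + PowerSeries.cos A ^ 2 = 1 := by
  have : IsAddTorsionFree A := .of_module_rat A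
  refine PowerSeries.derivative.ext ?_ (by simp [PowerSeries.sin, PowerSeries.cos])
  rw [map_add, Derivation.leibniz_pow, Derivation.leibniz_pow, derivative_powerSeries_sin,
    derivative_powerSeries_cos, Derivation.map_one_eq_zero]
  simp only [smul_eq_mul, nsmul_eq_mul]
  ring

theorem abs_coeff_powerSeries_sin_le (k : ℕ) :
    |PowerSeries.coeff k (PowerSeries.sin ℝ)| ≤ PowerSeries.coeff k (PowerSeries.exp ℝ) := by
  rw [PowerSeries.sin, PowerSeries.coeff_mk, PowerSeries.coeff_exp]
  split_ifs
  · simp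
  · simp [abs_div]

theorem abs_coeff_powerSeries_cos_le (k : ℕ) :
    |PowerSeries.coeff k (PowerSeries.cos ℝ)| ≤ PowerSeries.coeff k (PowerSeries.exp ℝ) := by
  rw [PowerSeries.cos, PowerSeries.coeff_mk, PowerSeries.coeff_exp]
  split_ifs
  · simp [abs_div]
  · simp

end Trigonometric

section Rescale

variable {p q : PowerSeries ℝ}

theorem abs_coeff_rescale_le (hpq : ∀ k, |PowerSeries.coeff k p| ≤ PowerSeries.coeff k q)
    {g : ℝ} (hg : |g| ≤ 1) (k : ℕ) :
    |PowerSeries.coeff k (PowerSeries.rescale g p)| ≤ PowerSeries.coeff k q := by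
  rw [PowerSeries.coeff_rescale, abs_mul, abs_pow]
  exact (mul_le_of_le_one_left (abs_nonneg _) (pow_le_one₀ (abs_nonneg g) hg)).trans (hpq k)

theorem coeff_inv_smul_rescale (hp : PowerSeries.coeff 0 p = 0) {g : ℝ} (hg : g ≠ 0) (k : ℕ) :
    PowerSeries.coeff k (g⁻¹ • PowerSeries.rescale g p) =
      g ^ (k - 1) * PowerSeries.coeff k p := by
  rw [map_smul, PowerSeries.coeff_rescale, smul_eq_mul]
  cases k with
  | zero => rw [hp, mul_zero, mul_zero]
  | succ k => rw [Nat.add_sub_cancel, pow_succ']; field_simp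

theorem tendsto_coeff_rescale (p : PowerSeries ℝ) (k : ℕ) :
    Tendsto (fun g => PowerSeries.coeff k (PowerSeries.rescale g p)) (𝓝[>] 0)
      (𝓝 (PowerSeries.coeff k (PowerSeries.C (PowerSeries.constantCoeff p)))) := by
  have hlim : Tendsto (fun g : ℝ => g ^ k * PowerSeries.coeff k p) (𝓝[>] 0)
      (𝓝 (0 ^ k * PowerSeries.coeff k p)) :=
    ((tendsto_nhdsWithin_of_tendsto_nhds tendsto_id).pow k).mul_const _
  simp only [PowerSeries.coeff_rescale]
  convert hlim using 2
  cases k <;> simp [PowerSeries.coeff_C]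

theorem abs_coeff_inv_smul_rescale_le
    (hpq : ∀ k, |PowerSeries.coeff k p| ≤ PowerSeries.coeff k q)
    (hp : PowerSeries.coeff 0 p = 0) {g : ℝ} (hg : g ≠ 0) (hg' : |g| ≤ 1) (k : ℕ) :
    |PowerSeries.coeff k (g⁻¹ • PowerSeries.rescale g p)| ≤ PowerSeries.coeff k q := by
  rw [coeff_inv_smul_rescale hp hg, abs_mul, abs_pow]
  exact (mul_le_of_le_one_left (abs_nonneg _) (pow_le_one₀ (abs_nonneg g) hg')).trans (hpq k)

theorem tendsto_coeff_inv_smul_rescale (hp : PowerSeries.coeff 0 p = 0) (k : ℕ) :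
    Tendsto (fun g : ℝ => PowerSeries.coeff k (g⁻¹ • PowerSeries.rescale g p)) (𝓝[>] 0)
      (𝓝 (PowerSeries.coeff k (PowerSeries.coeff 1 p • PowerSeries.X))) := by
  have hlim : Tendsto (fun g : ℝ => g ^ (k - 1) * PowerSeries.coeff k p) (𝓝[>] 0)
      (𝓝 (0 ^ (k - 1) * PowerSeries.coeff k p)) :=
    ((tendsto_nhdsWithin_of_tendsto_nhds tendsto_id).pow (k - 1)).mul_const _
  have hzero : 0 ^ (k - 1) * PowerSeries.coeff k p =
      PowerSeries.coeff k (PowerSeries.coeff 1 p • PowerSeries.X) := by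
    rcases k with _ | _ | k <;> simp [PowerSeries.coeff_X, hp]
  rw [← hzero]
  refine hlim.congr' ?_
  filter_upwards [self_mem_nhdsWithin] with g hg
  rw [coeff_inv_smul_rescale hp (ne_of_gt hg)]

end Rescale

theorem map_aeval_smul_sin_mul_cos_nonneg {A : Type*} [CommRing A] [Algebra ℝ A] {Λ : A →ₗ[ℝ] ℝ}
    (hΛ : ∀ a, 0 ≤ Λ (a * a)) {σ : Type*} [Finite σ] {s c : σ → A}
    (hsc : ∀ i, s i ^ 2 + c i ^ 2 = 1) (t : ℝ) {f : MvPolynomial σ ℝ}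
    (hf : ∀ x, 0 ≤ eval x f) : 0 ≤ Λ (aeval (fun i => t • (s i * c i)) f) := by
  have hhalf : (2 : A) * algebraMap ℝ A (1 / 2) = 1 := by
    rw [← map_ofNat (algebraMap ℝ A) 2, ← map_mul]; norm_num
  have hsq (a : A) : IsSumSq (algebraMap ℝ A (1 / 2) * (a * a)) :=
    (isSumSq_algebraMap (by norm_num)).mul (IsSumSq.mul_self a)
  have hadd (i : σ) : algebraMap ℝ A (1 / 2) * ((c i + s i) * (c i + s i)) =
      algebraMap ℝ A (1 / 2) + s i * c i := by
    linear_combination algebraMap ℝ A (1 / 2) * hsc i + s i * c i * hhalf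
  have hsub (i : σ) : algebraMap ℝ A (1 / 2) * ((c i - s i) * (c i - s i)) =
      1 - (algebraMap ℝ A (1 / 2) + s i * c i) := by
    linear_combination algebraMap ℝ A (1 / 2) * hsc i + (1 - s i * c i) * hhalf
  have h := map_aeval_nonneg_of_forall_Icc (fun _ => map_nonneg_of_isSumSq hΛ)
    (fun i => hadd i ▸ hsq (c i + s i)) (fun i => hsub i ▸ hsq (c i - s i))
    (P := bind₁ (fun i => C t * (X i - C (1 / 2))) f)
    fun x _ => by rw [eval, eval₂Hom_bind₁]; exact hf _
  rw [aeval_bind₁] at h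
  convert h using 4
  funext i
  rw [map_mul, map_sub, aeval_X, algHom_C, algHom_C, add_sub_cancel_left, Algebra.smul_def]

section Positivity

variable {σ : Type*} {L : MvPolynomial σ ℝ →ₗ[ℝ] ℝ} {i : σ} {p q : PowerSeries ℝ}

theorem momentTendsto_substX_rescale (hq : MomentSummable L (substX i q))
    (hpq : ∀ k, |PowerSeries.coeff k p| ≤ PowerSeries.coeff k q) :
    MomentTendsto L (fun g => substX i (PowerSeries.rescale g p)) (𝓝[>] 0)
      (C (PowerSeries.constantCoeff p) : MvPolynomial σ ℝ) := by
  convert momentTendsto_substX hq ?_ (tendsto_coeff_rescale p) using 1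
  · rw [coe_C, ← PowerSeries.algebraMap_eq, AlgHom.commutes, MvPowerSeries.algebraMap_apply,
      Algebra.algebraMap_self_apply]
  · filter_upwards [Ioo_mem_nhdsGT one_pos] with g hg
    exact abs_coeff_rescale_le hpq (abs_le.2 ⟨by linarith [hg.1], hg.2.le⟩)

theorem momentTendsto_substX_inv_smul_rescale (hq : MomentSummable L (substX i q))
    (hpq : ∀ k, |PowerSeries.coeff k p| ≤ PowerSeries.coeff k q)
    (hp : PowerSeries.coeff 0 p = 0) :
    MomentTendsto L (fun g : ℝ => substX i (g⁻¹ • PowerSeries.rescale g p)) (𝓝[>] 0)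
      (PowerSeries.coeff 1 p • X i : MvPolynomial σ ℝ) := by
  convert momentTendsto_substX hq ?_ (tendsto_coeff_inv_smul_rescale hp) using 1
  · rw [coe_smul, coe_X, map_smul, substX, PowerSeries.coe_substAlgHom,
      PowerSeries.subst_X (PowerSeries.HasSubst.X i)]
  · filter_upwards [Ioo_mem_nhdsGT one_pos] with g hg
    exact abs_coeff_inv_smul_rescale_le hpq hp hg.1.ne' (abs_le.2 ⟨by linarith [hg.1], hg.2.le⟩)

theorem momentTendsto_inv_smul_substX_sin_mul_cos (hL : ∀ p, 0 ≤ L (p * p))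
    (hi : MomentSummable L (substX i (PowerSeries.exp ℝ))) :
    MomentTendsto L (fun g : ℝ => g⁻¹ • (substX i (PowerSeries.rescale g (PowerSeries.sin ℝ)) *
      substX i (PowerSeries.rescale g (PowerSeries.cos ℝ)))) (𝓝[>] 0)
      (X i : MvPolynomial σ ℝ) := by
  have hsin := momentTendsto_substX_inv_smul_rescale hi abs_coeff_powerSeries_sin_le
    (by simp [PowerSeries.sin])
  have hcos := momentTendsto_substX_rescale hi abs_coeff_powerSeries_cos_le
  convert hsin.mul hL hcos using 2
  · rw [map_smul, smul_mul_assoc]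
  · simp [PowerSeries.sin, PowerSeries.cos, ← PowerSeries.coeff_zero_eq_constantCoeff_apply]

theorem map_nonneg_of_momentSummable_exp [Finite σ] (hL : ∀ p, 0 ≤ L (p * p))
    (hexp : ∀ i, MomentSummable L (substX i (PowerSeries.exp ℝ))) {f : MvPolynomial σ ℝ}
    (hf : ∀ x, 0 ≤ eval x f) : 0 ≤ L f := by
  have hmem {p : PowerSeries ℝ}
      (hp : ∀ k, |PowerSeries.coeff k p| ≤ PowerSeries.coeff k (PowerSeries.exp ℝ))
      {g : ℝ} (hg : |g| ≤ 1) (i : σ) :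
      substX i (PowerSeries.rescale g p) ∈ momentSubalgebra L hL :=
    (hexp i).of_abs_coeff_le fun α =>
      (abs_coeff_substX_le (abs_coeff_rescale_le hp hg) i α).trans (le_abs_self _)
  have hlim := MomentTendsto.aeval_coe hL
    (fun i => momentTendsto_inv_smul_substX_sin_mul_cos hL (hexp i)) f
  rw [aeval_X_left_apply] at hlim
  rw [← momentTsum_coe]
  refine ge_of_tendsto hlim.tendsto_momentTsum ?_
  filter_upwards [Ioo_mem_nhdsGT one_pos] with g hg
  have hg' : |g| ≤ 1 := abs_le.2 ⟨by linarith [hg.1], hg.2.le⟩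
  let s (i : σ) : momentSubalgebra L hL := ⟨_, hmem abs_coeff_powerSeries_sin_le hg' i⟩
  let c (i : σ) : momentSubalgebra L hL := ⟨_, hmem abs_coeff_powerSeries_cos_le hg' i⟩
  have hsc (i : σ) : s i ^ 2 + c i ^ 2 = 1 := Subtype.ext <| by
    simp only [s, c, Subalgebra.coe_add, Subalgebra.coe_pow, Subalgebra.coe_one, ← map_pow,
      ← map_add, powerSeries_sin_sq_add_cos_sq, map_one]
  have h := map_aeval_smul_sin_mul_cos_nonneg (Λ := momentExtension L hL)
    (fun F => momentTsum_mul_self_nonneg hL F.2) hsc g⁻¹ hf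
  have hval : ((aeval (fun i => g⁻¹ • (s i * c i)) f : momentSubalgebra L hL) :
      MvPowerSeries σ ℝ) = aeval (fun i => g⁻¹ • ((s i : MvPowerSeries σ ℝ) * c i)) f :=
    comp_aeval_apply _ (momentSubalgebra L hL).val f
  exact h.trans_eq (congrArg (momentTsum L) hval)

end Positivity

theorem map_X_pow_le_factorial {n : ℕ} {L : MvPolynomial (Fin n) ℝ →ₗ[ℝ] ℝ}
    (hL : ∀ p, 0 ≤ L (p * p)) {k : ℕ} (hk : L (theta n k) ≤ 1) (i : Fin n) :
    L (X i ^ (2 * k)) ≤ k.factorial := by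
  have h := map_nonneg_of_isSumSq hL (isSumSq_theta_sub_term k i)
  rw [map_sub, ← smul_eq_C_mul, map_smul, smul_eq_mul, one_div_mul_eq_div] at h
  exact (div_le_one₀ (by positivity)).1 (by linarith)

theorem isSumSq_of_isEmpty {σ : Type*} [IsEmpty σ] {f : MvPolynomial σ ℝ}
    (hf : ∀ x, 0 ≤ eval x f) : IsSumSq f := by
  rw [eq_C_of_isEmpty f]
  exact isSumSq_algebraMap (by simpa [constantCoeff_eq] using hf 0)

theorem exists_isSumSq_add_mul_theta {n : ℕ} {f : MvPolynomial (Fin n) ℝ}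
    (hf : ∀ x, 0 ≤ eval x f) {ε : ℝ} (hε : 0 < ε) : ∃ r, IsSumSq (f + C ε * theta n r) := by
  rcases Nat.eq_zero_or_pos n with rfl | hn
  · exact ⟨0, (isSumSq_of_isEmpty hf).add (isSumSq_C_mul (isSumSq_theta 0 0) hε.le)⟩
  have : NeZero n := ⟨hn.ne'⟩
  by_contra! hnot
  obtain ⟨L, hL, hθ, hLf⟩ := exists_linearMap_neg_of_forall_not_isSumSq hε hnot
  refine hLf.not_ge (map_nonneg_of_momentSummable_exp hL (fun i => ?_) hf)
  exact momentSummable_substX_exp hL fun k => map_X_pow_le_factorial hL (hθ k) i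

theorem sos_approx_of_nonneg (n : ℕ) (f : MvPolynomial (Fin n) ℝ)
    (hf : ∀ x : Fin n → ℝ, 0 ≤ eval x f) :
    ∀ ε : ℝ, 0 < ε → ∃ r₀ : ℕ, ∀ r : ℕ, r₀ ≤ r →
      IsSOS (f + C ε * theta n r) := by
  intro ε hε
  obtain ⟨r₀, hr₀⟩ := exists_isSumSq_add_mul_theta hf hε
  refine ⟨r₀, fun r hr => isSOS_iff_isSumSq.2 ?_⟩
  have hneg (s : ℕ) : f + C ε * theta n s = C ε * theta n s - -f := by ring
  rw [hneg] at hr₀ ⊢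
  exact isSumSq_mul_theta_sub_mono hr₀ hε.le le_rfl hr
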